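/- Let E be a directed graph with E^0 finite and K a non-absolute field. Assume L_K(E) contains a primitive ideal P of type I, i.e., P = I(H, B_H∖{w}) where H = P ∩ E^0 is hereditary and saturated, w ∈ B_H is a breaking vertex with M(w) = E^0∖H, and assume L_K(E)/P is non-commutative. Then for any edge f ∈ E^1 with r(f) = w: (i) if char K = 0 and α ∈ K is equal to 2 or transcendental over the prime subfield ℚ, the elements a := 1 + α w^H f^* and b := 1 + α f w^H generate a non-cyclic free subgroup of L_K(E)^×; (ii) if char K = t > 0 and α, β ∈ K are algebraically independent over the prime subfield 𝔽_t, the elements c := a + (β−1) s(f) + (β^{-1}−1) w^H and d := b + (β−1) s(f) + (β^{-1}−1) w^H generate a non-cyclic free subgroup of L_K(E)^×. -/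

import Mathlib

/-!
The elements `w^H`, `f w^H`, `w^H f^*` behave like the matrix units `e₂₂`, `e₁₂`, `e₂₁`
(`LPA.unitsData`): since `r(f) = w ∉ H`, the product `w^H f` vanishes, while
`w^H f^* f w^H = w^H`. Moreover `w^H ≠ 0` (`LPA.wHElem_ne_zero`): the algebra acts on functions on
the set of finite paths ending at `w`, where (CK2) holds because `w` is an infinite emitter, and
there `w^H` fixes the trivial path at `w`.

Consequently the units in question act by left multiplication on the plane spanned by `f w^H` and
`w^H` as the triangular matrices `[l, 0; α, m]` and `[l, α; 0, m]`. Here `l = m = 1` in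
characteristic zero. In positive characteristic `l = β`, while `m = β⁻¹` if `s(f) ≠ w` and
`m = β + β⁻¹ - 1` if `f` is a loop at `w`, where `s(f) = w` also acts on `w^H`. Freeness follows
from the ping-pong lemma (`freePair_of_triangular`). The entries of all powers of these matrices
come from a ring `R` with an absolute value for which the diagonal entries have size `1` and the
off-diagonal entry of every nontrivial power has size at least `2`, so these powers exchange the
regions where one coordinate is larger than the other. The ring `R` is `ℤ` if `α = 2`, it is `ℤ[X]`
if `α` is transcendental in characteristic zero, and it is `𝔽_t(β)[X]` in characteristic `t`;
polynomials have size `2 ^ deg` and are evaluated at `X = α`. In the last case the off-diagonal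
entry is nonzero because `l / m` is not a root of unity (`zpow_ne_of_transcendental`).
-/

noncomputable section
open scoped Classical
universe u

/-- `a` and `b` generate a free group of rank two, i.e. form a non-cyclic free subgroup. -/
def FreePair {G : Type*} [Group G] (a b : G) : Prop :=
  Function.Injective (FreeGroup.lift ![a, b] : FreeGroup (Fin 2) →* G)

/-- A field is absolute (locally finite) if every finite subset generates a finite
subfield over the prime subfield. -/
def IsAbsoluteField (K : Type*) [Field K] : Prop :=
  ∀ S : Finset K, ((Subfield.closure (S : Set K) : Subfield K) : Set K).Finite

/-- `a` is transcendental over the prime subfield of `K`. -/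
def TranscendentalOverPrime (K : Type*) [Field K] (a : K) : Prop :=
  ∀ p : Polynomial ℤ, Polynomial.aeval a p = 0 → p.map (Int.castRingHom K) = 0

/-- `a` and `b` are algebraically independent over the prime subfield of `K`. -/
def AlgIndepOverPrime (K : Type*) [Field K] (a b : K) : Prop :=
  ∀ p : MvPolynomial (Fin 2) ℤ, MvPolynomial.aeval ![a, b] p = 0 →
    MvPolynomial.map (Int.castRingHom K) p = 0

/-- A two-sided ideal is (left) primitive if it is the annihilator of a simple left module. -/
def IsPrimitiveIdeal {R : Type u} [Ring R] (P : TwoSidedIdeal R) : Prop :=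
  ∃ (M : Type u) (_ : AddCommGroup M) (_ : Module R M),
    IsSimpleModule R M ∧ ∀ x : R, x ∈ P ↔ ∀ m : M, x • m = 0

namespace LPA

/-- Generators of Cohn/Leavitt path algebras: vertices, edges and ghost edges. -/
inductive Gen (V : Type*) (E : Type*)
  | vertex : V → Gen V E
  | edge : E → Gen V E
  | ghost : E → Gen V E

section rels

variable (K : Type*) [Field K] {V E : Type*} (s r : E → V)

/-- The defining relations (V), (E1), (E2), (CK1) of the Cohn path algebra of the graph
with vertex set `V`, edge set `E`, source map `s` and range map `r`; together with the
identification of `1` with the sum of all vertices when the vertex set is finite. -/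
inductive CohnRel : FreeAlgebra K (Gen V E) → FreeAlgebra K (Gen V E) → Prop
  | vtx_mul (v w : V) :
      CohnRel (FreeAlgebra.ι K (Gen.vertex v) * FreeAlgebra.ι K (Gen.vertex w))
        (if v = w then FreeAlgebra.ι K (Gen.vertex v) else 0)
  | edge_src (e : E) :
      CohnRel (FreeAlgebra.ι K (Gen.vertex (s e)) * FreeAlgebra.ι K (Gen.edge e))
        (FreeAlgebra.ι K (Gen.edge e))
  | edge_rng (e : E) :
      CohnRel (FreeAlgebra.ι K (Gen.edge e) * FreeAlgebra.ι K (Gen.vertex (r e)))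
        (FreeAlgebra.ι K (Gen.edge e))
  | ghost_rng (e : E) :
      CohnRel (FreeAlgebra.ι K (Gen.vertex (r e)) * FreeAlgebra.ι K (Gen.ghost e))
        (FreeAlgebra.ι K (Gen.ghost e))
  | ghost_src (e : E) :
      CohnRel (FreeAlgebra.ι K (Gen.ghost e) * FreeAlgebra.ι K (Gen.vertex (s e)))
        (FreeAlgebra.ι K (Gen.ghost e))
  | ck1 (e f : E) :
      CohnRel (FreeAlgebra.ι K (Gen.ghost e) * FreeAlgebra.ι K (Gen.edge f))
        (if e = f then FreeAlgebra.ι K (Gen.vertex (r e)) else 0)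
  | unit [Fintype V] :
      CohnRel (1 : FreeAlgebra K (Gen V E)) (∑ v : V, FreeAlgebra.ι K (Gen.vertex v))

/-- The defining relations of the Leavitt path algebra: those of the Cohn path algebra
together with the (CK2) relations at every regular vertex. -/
inductive LeavittRel : FreeAlgebra K (Gen V E) → FreeAlgebra K (Gen V E) → Prop
  | cohn {a b : FreeAlgebra K (Gen V E)} : CohnRel K s r a b → LeavittRel a b
  | ck2 (v : V) (hfin : {e : E | s e = v}.Finite) (hne : {e : E | s e = v}.Nonempty) :
      LeavittRel (FreeAlgebra.ι K (Gen.vertex v))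
        (∑ e ∈ hfin.toFinset, FreeAlgebra.ι K (Gen.edge e) * FreeAlgebra.ι K (Gen.ghost e))

/-- The Cohn path algebra of the graph `(V, E, s, r)` with coefficients in `K`. -/
abbrev CohnPathAlgebra := RingQuot (CohnRel K s r)

/-- The Leavitt path algebra of the graph `(V, E, s, r)` with coefficients in `K`. -/
abbrev LeavittPathAlgebra := RingQuot (LeavittRel K s r)

/-- The image of a vertex in the Leavitt path algebra. -/
def vtx (v : V) : LeavittPathAlgebra K s r :=
  RingQuot.mkAlgHom K (LeavittRel K s r) (FreeAlgebra.ι K (Gen.vertex v))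

/-- The image of an edge in the Leavitt path algebra. -/
def edg (e : E) : LeavittPathAlgebra K s r :=
  RingQuot.mkAlgHom K (LeavittRel K s r) (FreeAlgebra.ι K (Gen.edge e))

/-- The image of a ghost edge in the Leavitt path algebra. -/
def gh (e : E) : LeavittPathAlgebra K s r :=
  RingQuot.mkAlgHom K (LeavittRel K s r) (FreeAlgebra.ι K (Gen.ghost e))

end rels

section graph

variable {V E : Type*}

/-- `u ≥ v` : there is a (finite, possibly trivial) path from `u` to `v`. -/
def Reaches (s r : E → V) (u v : V) : Prop :=
  Relation.ReflTransGen (fun a b => ∃ e : E, s e = a ∧ r e = b) u v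

/-- A sink emits no edges. -/
def IsSink (s : E → V) (v : V) : Prop := ∀ e : E, s e ≠ v

/-- An infinite emitter emits infinitely many edges. -/
def IsInfiniteEmitter (s : E → V) (v : V) : Prop := {e : E | s e = v}.Infinite

/-- A regular vertex is neither a sink nor an infinite emitter. -/
def IsRegular (s : E → V) (v : V) : Prop :=
  (∃ e : E, s e = v) ∧ {e : E | s e = v}.Finite

/-- Hereditary subsets of vertices. -/
def IsHereditary (s r : E → V) (H : Set V) : Prop :=
  ∀ u ∈ H, ∀ v : V, Reaches s r u v → v ∈ H

/-- Saturated subsets of vertices. -/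
def IsSaturated (s r : E → V) (H : Set V) : Prop :=
  ∀ v : V, IsRegular s v → (∀ e : E, s e = v → r e ∈ H) → v ∈ H

/-- A breaking vertex of a hereditary saturated set `H`. -/
def IsBreakingVertex (s r : E → V) (H : Set V) (w : V) : Prop :=
  w ∉ H ∧ IsInfiniteEmitter s w ∧
    {e : E | s e = w ∧ r e ∉ H}.Finite ∧ {e : E | s e = w ∧ r e ∉ H}.Nonempty

/-- An infinite path, as a sequence of composable edges. -/
def IsInfPath (s r : E → V) (p : ℕ → E) : Prop := ∀ i, r (p i) = s (p (i + 1))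

/-- Tail equivalence of infinite paths. -/
def TailEquiv (p q : ℕ → E) : Prop := ∃ m n : ℕ, ∀ i, p (m + i) = q (n + i)

/-- Prepending an edge to an infinite path. -/
def consPath (f : E) (p : ℕ → E) : ℕ → E := fun i =>
  match i with
  | 0 => f
  | (j + 1) => p j

/-- A cycle of length `m`, encoded as the `m`-periodic infinite path obtained by
traversing it repeatedly; the sources of its first `m` edges are pairwise distinct. -/
def IsCycle (s r : E → V) (m : ℕ) (c : ℕ → E) : Prop :=
  0 < m ∧ IsInfPath s r c ∧ (∀ i, c (i + m) = c i) ∧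
    ∀ i j, i < m → j < m → s (c i) = s (c j) → i = j

/-- A cycle (as a periodic infinite path) has no exits. -/
def CycleNoExit (s : E → V) (c : ℕ → E) : Prop :=
  ∀ i, ∀ e : E, s e = s (c i) → e = c i

/-- An exclusive cycle: every cycle based at one of its vertices is a rotation of it. -/
def IsExclusiveCycle (s r : E → V) (m : ℕ) (c : ℕ → E) : Prop :=
  IsCycle s r m c ∧ ∀ (m' : ℕ) (c' : ℕ → E), IsCycle s r m' c' →
    (∃ i, s (c' 0) = s (c i)) → ∃ k, ∀ j, c' j = c (j + k)

/-- `l` is (the list of edges of) a finite path starting at the vertex `v`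
(the empty list is the trivial path at `v`). -/
def IsPathFrom (s r : E → V) (v : V) (l : List E) : Prop :=
  l.Chain' (fun e f => r e = s f) ∧ ∀ h : l ≠ [], s (l.head h) = v

/-- The terminal vertex of a finite path starting at `v`. -/
def pathEnd (r : E → V) (v : V) (l : List E) : V :=
  if h : l ≠ [] then r (l.getLast h) else v

end graph

section elements

variable (K : Type*) [Field K] {V E : Type*} (s r : E → V)

/-- The finite set of edges emitted by a breaking vertex `w` of `H` whose range is
outside `H` (junk value `∅` if that set of edges is infinite). -/
def breakingFinset (H : Set V) (w : V) : Finset E :=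
  if h : {e : E | s e = w ∧ r e ∉ H}.Finite then h.toFinset else ∅

/-- The element `w^H = w - ∑_{s(e) = w, r(e) ∉ H} e e^*` of the Leavitt path algebra. -/
def wHElem (H : Set V) (w : V) : LeavittPathAlgebra K s r :=
  vtx K s r w - ∑ e ∈ breakingFinset s r H w, edg K s r e * gh K s r e

/-- The ideal `I(H, S)` generated by the vertices in `H` and the elements `w^H`, `w ∈ S`. -/
def idealHS (H : Set V) (S : Set V) : TwoSidedIdeal (LeavittPathAlgebra K s r) :=
  TwoSidedIdeal.span ((fun v => vtx K s r v) '' H ∪ (fun w => wHElem K s r H w) '' S)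

end elements

end LPA

/-- A (left) primitive ring: a ring admitting a faithful simple left module. -/
def IsPrimitiveRing (R : Type u) [Ring R] : Prop :=
  ∃ (M : Type u) (_ : AddCommGroup M) (_ : Module R M),
    IsSimpleModule R M ∧ ∀ x : R, (∀ m : M, x • m = 0) → x = 0

namespace LPA

section conc

variable {V E : Type*}

/-- Reachability through paths all of whose vertices beyond the first lie outside `H`,
i.e. reachability in the quotient graph `E ∖ (H, B_H)`. -/
def ReachesOutside (s r : E → V) (H : Set V) (u v : V) : Prop :=
  Relation.ReflTransGen (fun a b => ∃ e : E, s e = a ∧ r e = b ∧ r e ∉ H) u v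

variable (K : Type*) [Field K] (s r : E → V)

/-- The standard conclusion: for an edge `f`, in characteristic zero the elements
`a = 1 + α f^*`, `b = 1 + α f` (with `α = 2` or transcendental over the prime field)
generate a non-cyclic free subgroup of `L_K(E)^×`, and in characteristic `t > 0` the
elements `c = a + (β - 1) s(f) + (β⁻¹ - 1) r(f)`, `d = b + (β - 1) s(f) + (β⁻¹ - 1) r(f)`
(with `α, β` algebraically independent over the prime field) do. -/
def FreeSubgroupFromEdge (f : E) : Prop :=
  ∀ α β : K,
    (CharP K 0 → (α = 2 ∨ TranscendentalOverPrime K α) →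
      ∃ ua ub : (LeavittPathAlgebra K s r)ˣ,
        (ua : LeavittPathAlgebra K s r) =
            1 + algebraMap K (LeavittPathAlgebra K s r) α * gh K s r f ∧
        (ub : LeavittPathAlgebra K s r) =
            1 + algebraMap K (LeavittPathAlgebra K s r) α * edg K s r f ∧
        FreePair ua ub) ∧
    (∀ t : ℕ, 0 < t → CharP K t → AlgIndepOverPrime K α β →
      ∃ uc ud : (LeavittPathAlgebra K s r)ˣ,
        (uc : LeavittPathAlgebra K s r) =
            1 + algebraMap K (LeavittPathAlgebra K s r) α * gh K s r f
              + algebraMap K (LeavittPathAlgebra K s r) (β - 1) * vtx K s r (s f)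
              + algebraMap K (LeavittPathAlgebra K s r) (β⁻¹ - 1) * vtx K s r (r f) ∧
        (ud : LeavittPathAlgebra K s r) =
            1 + algebraMap K (LeavittPathAlgebra K s r) α * edg K s r f
              + algebraMap K (LeavittPathAlgebra K s r) (β - 1) * vtx K s r (s f)
              + algebraMap K (LeavittPathAlgebra K s r) (β⁻¹ - 1) * vtx K s r (r f) ∧
        FreePair uc ud)

end conc

end LPA

/-! ### Ping-pong on a plane inside an algebra -/

section pingpong

open scoped Pointwise

variable {K A : Type*} [Field K] [Ring A] [Algebra K A]

/-- The relations satisfied by the matrix units `e = e₂₂`, `y = e₁₂`, `x = e₂₁` of a copy of the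
`2 × 2` matrices inside `A`, together with an idempotent `p` that is orthogonal to `e` and
dominates `e₁₁ = y * x`; equality `p = y * x` is not required. -/
structure UnitsData (p e x y : A) : Prop where
  pp : p * p = p
  ee : e * e = e
  pe : p * e = 0
  ep : e * p = 0
  ex : e * x = x
  xp : x * p = x
  py : p * y = y
  ye : y * e = y
  xy : x * y = e

namespace UnitsData

variable {p e x y : A} (h : UnitsData p e x y)
include h

lemma px : p * x = 0 := by rw [← h.ex, ← mul_assoc, h.pe, zero_mul]
lemma xe : x * e = 0 := by rw [← h.xp, mul_assoc, h.pe, mul_zero]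
lemma xx : x * x = 0 := by
  calc x * x = x * p * x := by rw [h.xp]
    _ = 0 := by rw [mul_assoc, h.px, mul_zero]
lemma ey : e * y = 0 := by rw [← h.py, ← mul_assoc, h.ep, zero_mul]
lemma yp : y * p = 0 := by rw [← h.ye, mul_assoc, h.ep, mul_zero]
lemma yy : y * y = 0 := by
  calc y * y = y * e * y := by rw [h.ye]
    _ = 0 := by rw [mul_assoc, h.ey, mul_zero]

/-- The lower triangular element with diagonal `(l, m)` is a unit. -/
lemma exists_unit_x {l m : K} (hl : l ≠ 0) (hm : m ≠ 0) (α : K) :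
    ∃ u : Aˣ, (u : A) = 1 + α • x + (l - 1) • p + (m - 1) • e := by
  refine ⟨⟨_, 1 + (-(α * l⁻¹ * m⁻¹)) • x + (l⁻¹ - 1) • p + (m⁻¹ - 1) • e, ?_, ?_⟩, rfl⟩ <;>
  · simp only [mul_add, add_mul, mul_one, one_mul, smul_mul_assoc, mul_smul_comm, h.pp, h.ee,
      h.pe, h.ep, h.ex, h.xp, h.px, h.xe, h.xx, smul_zero]
    match_scalars <;> field_simp <;> ring

/-- The upper triangular element with diagonal `(l, m)` is a unit. -/
lemma exists_unit_y {l m : K} (hl : l ≠ 0) (hm : m ≠ 0) (α : K) :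
    ∃ u : Aˣ, (u : A) = 1 + α • y + (l - 1) • p + (m - 1) • e := by
  refine ⟨⟨_, 1 + (-(α * l⁻¹ * m⁻¹)) • y + (l⁻¹ - 1) • p + (m⁻¹ - 1) • e, ?_, ?_⟩, rfl⟩ <;>
  · simp only [mul_add, add_mul, mul_one, one_mul, smul_mul_assoc, mul_smul_comm, h.pp, h.ee,
      h.pe, h.ep, h.py, h.ye, h.ey, h.yp, h.yy, smul_zero]
    match_scalars <;> field_simp <;> ring

/-- `y` and `e` span a plane on which left multiplication is faithfully coordinatized. -/
lemma coords_inj (he : e ≠ 0) {a b a' b' : K} (hab : a • y + b • e = a' • y + b' • e) :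
    a = a' ∧ b = b' := by
  constructor
  · have := congrArg (x * ·) hab
    simp only [mul_add, mul_smul_comm, h.xy, h.xe, smul_zero, add_zero] at this
    exact smul_left_injective K he this
  · have := congrArg (e * ·) hab
    simp only [mul_add, mul_smul_comm, h.ey, h.ee, smul_zero, zero_add] at this
    exact smul_left_injective K he this

lemma unit_x_smul {l m α : K} {u : Aˣ}
    (hu : (u : A) = 1 + α • x + (l - 1) • p + (m - 1) • e) (a b : K) :
    u • (a • y + b • e) = (l * a) • y + (α * a + m * b) • e := by
  rw [Units.smul_def, hu, smul_eq_mul]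
  simp only [mul_add, add_mul, one_mul, smul_mul_assoc, mul_smul_comm, h.ee,
      h.pe, h.py, h.ey, h.xy, h.xe, smul_zero]
  module

lemma unit_y_smul {l m α : K} {u : Aˣ}
    (hu : (u : A) = 1 + α • y + (l - 1) • p + (m - 1) • e) (a b : K) :
    u • (a • y + b • e) = (l * a + α * b) • y + (m * b) • e := by
  rw [Units.smul_def, hu, smul_eq_mul]
  simp only [mul_add, add_mul, one_mul, smul_mul_assoc, mul_smul_comm, h.ee,
      h.pe, h.py, h.ey, h.ye, h.yy, smul_zero]
  module

end UnitsData

/-- Integer powers of a triangular transformation: if `u` acts on the pairs `ψ a b` as the matrix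
`[l, 0; α, m]`, then `u ^ n` acts as `[l ^ n, 0; α * S n, m ^ n]`. -/
lemma zpow_smul_triangular {G X : Type*} [Group G] [MulAction G X] (ψ : K → K → X)
    {l m α : K} (hl : l ≠ 0) (hm : m ≠ 0) (S : ℤ → K) (h0 : S 0 = 0)
    (hS : ∀ n, S (n + 1) = l ^ n + m * S n) {u : G}
    (hu : ∀ a b, u • ψ a b = ψ (l * a) (α * a + m * b)) (n : ℤ) (a b : K) :
    u ^ n • ψ a b = ψ (l ^ n * a) (α * S n * a + m ^ n * b) := by
  have step : ∀ n : ℤ, u • ψ (l ^ n * a) (α * S n * a + m ^ n * b) =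
      ψ (l ^ (n + 1) * a) (α * S (n + 1) * a + m ^ (n + 1) * b) := by
    intro n
    rw [hu, hS, zpow_add_one₀ hl, zpow_add_one₀ hm]
    congr 1 <;> ring
  induction n using Int.induction_on with
  | zero => simp [h0]
  | succ n ih => rw [← step, ← ih, ← mul_smul, ← zpow_one_add, add_comm]
  | pred n ih =>
    have := step (-(n : ℤ) - 1)
    rw [sub_add_cancel, ← ih] at this
    rw [sub_eq_neg_add, zpow_add, zpow_neg_one, mul_smul, inv_smul_eq_iff, ← sub_eq_neg_add, this]

/-- The size estimate behind ping-pong. -/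
lemma abv_lt_of_two_le {R : Type*} [CommRing R] (N : AbsoluteValue R ℝ) {l' m' c a b : R}
    (hl : N l' = 1) (hm : N m' = 1) (hc : 2 ≤ N c) (hab : N b < N a) :
    N (l' * a) < N (c * a + m' * b) := by
  have h1 : N (c * a) ≤ N (c * a + m' * b) + N (m' * b) := by
    simpa using N.sub_le_add (c * a + m' * b) (m' * b)
  rw [map_mul, map_mul, hm] at h1
  rw [map_mul, hl]
  nlinarith [N.nonneg a]

/-- Two triangular units generate a free group, provided that the entries of all their nontrivial
powers come from a subring `R` of `K` with an absolute value `N` for which the diagonal entries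
have size `1` and the off-diagonal entry has size at least `2`. -/
theorem freePair_of_triangular {p e x y : A} (h : UnitsData p e x y) (he : e ≠ 0)
    {l m α : K} (hl : l ≠ 0) (hm : m ≠ 0)
    {R : Type*} [CommRing R] (ι : R →+* K) (hι : Function.Injective ι) (N : AbsoluteValue R ℝ)
    (S : ℤ → K) (h0 : S 0 = 0) (hS : ∀ n, S (n + 1) = l ^ n + m * S n)
    (hS' : ∀ n, S (n + 1) = m ^ n + l * S n)
    (hN : ∀ n : ℤ, n ≠ 0 → ∃ l' m' c : R, ι l' = l ^ n ∧ ι m' = m ^ n ∧ ι c = α * S n ∧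
      N l' = 1 ∧ N m' = 1 ∧ 2 ≤ N c)
    {ua ub : Aˣ} (hua : (ua : A) = 1 + α • x + (l - 1) • p + (m - 1) • e)
    (hub : (ub : A) = 1 + α • y + (l - 1) • p + (m - 1) • e) : FreePair ua ub := by
  have hza := zpow_smul_triangular (fun a b : K => a • y + b • e) hl hm S h0 hS (u := ua)
    (h.unit_x_smul hua)
  -- with the two coordinates exchanged, `ub` has the shape of `ua`
  have hzb := zpow_smul_triangular (fun b a : K => a • y + b • e) hm hl S h0 hS' (u := ub)
    (fun b a => by rw [h.unit_y_smul hub, add_comm (α * b)])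
  have : (FreeGroup.lift ![ua, ub] : FreeGroup (Fin 2) →* Aˣ) =
      (Monoid.CoprodI.lift fun i => FreeGroup.lift fun _ => (![ua, ub] : Fin 2 → Aˣ) i).comp
        (@freeGroupEquivCoprodI (Fin 2)).toMonoidHom := by
    ext i
    simp
  rw [FreePair, this, MonoidHom.coe_comp]
  refine Function.Injective.comp ?_ (MulEquiv.injective freeGroupEquivCoprodI)
  let X : Fin 2 → Set A := ![{z | ∃ a b : R, N a < N b ∧ z = ι a • y + ι b • e},
    {z | ∃ a b : R, N b < N a ∧ z = ι a • y + ι b • e}]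
  have hdisj : Disjoint (X 0) (X 1) := by
    rw [Set.disjoint_left]
    rintro z ⟨a, b, hab, rfl⟩ ⟨a', b', hab', hz⟩
    obtain ⟨h1, h2⟩ := h.coords_inj he hz
    rw [hι h1, hι h2] at hab
    exact lt_asymm hab hab'
  have hN1 : N 0 < N 1 := by
    have : Nontrivial R := ⟨by
      obtain ⟨-, -, c, -, -, -, -, -, hc⟩ := hN 1 one_ne_zero
      refine ⟨c, 0, ?_⟩
      rintro rfl
      norm_num at hc⟩
    simp
  have hpp0 : ∀ n : ℤ, n ≠ 0 → ua ^ n • X 1 ⊆ X 0 := by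
    rintro n hn _ ⟨_, ⟨a, b, hab, rfl⟩, rfl⟩
    obtain ⟨l', m', c, h1, h2, h3, h4, h5, h6⟩ := hN n hn
    refine ⟨l' * a, c * a + m' * b, abv_lt_of_two_le N h4 h5 h6 hab, ?_⟩
    change ua ^ n • (ι a • y + ι b • e) = _
    rw [hza, map_add, map_mul, map_mul, map_mul, h1, h2, h3]
  have hpp1 : ∀ n : ℤ, n ≠ 0 → ub ^ n • X 0 ⊆ X 1 := by
    rintro n hn _ ⟨_, ⟨a, b, hab, rfl⟩, rfl⟩
    obtain ⟨l', m', c, h1, h2, h3, h4, h5, h6⟩ := hN n hn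
    refine ⟨c * b + l' * a, m' * b, abv_lt_of_two_le N h5 h4 h6 hab, ?_⟩
    change ub ^ n • (ι a • y + ι b • e) = _
    rw [hzb, map_add, map_mul, map_mul, map_mul, h1, h2, h3]
  apply Monoid.CoprodI.lift_injective_of_ping_pong _ _ X
  · intro i
    fin_cases i
    · exact ⟨_, 0, 1, hN1, rfl⟩
    · exact ⟨_, 1, 0, hN1, rfl⟩
  · intro i j hij
    fin_cases i <;> fin_cases j
    · exact absurd rfl hij
    · exact hdisj
    · exact hdisj.symm
    · exact absurd rfl hij
  · rintro i j hij
    refine FreeGroup.freeGroupUnitEquivInt.forall_congr_left.mpr ?_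
    intro n hne1
    have hn : n ≠ 0 := by
      rintro rfl
      apply hne1
      simp [FreeGroup.freeGroupUnitEquivInt]
    change FreeGroup.lift (fun _ => (![ua, ub] : Fin 2 → Aˣ) i) (FreeGroup.of () ^ n) • X j ⊆ X i
    simp only [map_zpow, FreeGroup.lift_apply_of]
    fin_cases i <;> fin_cases j
    · exact absurd rfl hij
    · exact hpp0 n hn
    · exact hpp1 n hn
    · exact absurd rfl hij
  · right
    refine ⟨0, ?_⟩
    have : Infinite (FreeGroup Unit) := Infinite.of_injective _
      FreeGroup.freeGroupUnitEquivInt.symm.injective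
    exact (Cardinal.natCast_lt_aleph0 (n := 3)).le.trans (Cardinal.aleph0_le_mk _)

end pingpong

/-! ### The representation on paths ending at `w` -/

namespace LPA

section rep

variable {V E : Type*}

/-- The source of a list of edges, the empty list being the trivial path at `w`. -/
def lsrc (s : E → V) (w : V) : List E → V
  | [] => w
  | e :: _ => s e

lemma lsrc_nil (s : E → V) (w : V) : lsrc s w [] = w := rfl

lemma lsrc_cons (s : E → V) (w : V) (e : E) (l : List E) : lsrc s w (e :: l) = s e := rfl

/-- `IsPathTo s r w l` says that `l` is a path ending at `w`. -/
def IsPathTo (s r : E → V) (w : V) : List E → Prop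
  | [] => True
  | e :: l => r e = lsrc s w l ∧ IsPathTo s r w l

/-- The type of finite paths ending at `w`. -/
abbrev PathTo (s r : E → V) (w : V) := {l : List E // IsPathTo s r w l}

variable (K : Type*) [Field K] (s r : E → V) (w : V)

/-- A vertex acts on functions on paths by restriction to the paths starting there. -/
def vAct (v : V) : Module.End K (PathTo s r w → K) where
  toFun φ l := if lsrc s w l.1 = v then φ l else 0
  map_add' φ ψ := by ext l; simp only [Pi.add_apply]; split_ifs <;> simp
  map_smul' c φ := by ext l; simp

/-- An edge acts by prepending it to paths (pushing functions forward). -/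
def eAct (e : E) : Module.End K (PathTo s r w → K) where
  toFun φ l := match l with
    | ⟨[], _⟩ => 0
    | ⟨e' :: l', h⟩ => if e' = e then φ ⟨l', h.2⟩ else 0
  map_add' φ ψ := by
    ext ⟨l, h⟩
    cases l
    · simp
    · simp only [Pi.add_apply]; split_ifs <;> simp
  map_smul' c φ := by ext ⟨l, h⟩; cases l <;> simp

/-- A ghost edge acts by removing the edge from the paths starting with it. -/
def gAct (e : E) : Module.End K (PathTo s r w → K) where
  toFun φ l := if h : r e = lsrc s w l.1 then φ ⟨e :: l.1, h, l.2⟩ else 0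
  map_add' φ ψ := by ext l; simp only [Pi.add_apply]; split_ifs <;> simp
  map_smul' c φ := by ext l; simp

/-- The action of the generators on functions on the set of paths ending at `w`. -/
def genAct : Gen V E → Module.End K (PathTo s r w → K)
  | .vertex v => vAct K s r w v
  | .edge e => eAct K s r w e
  | .ghost e => gAct K s r w e

variable {s} in
/-- The relation (CK2) holds at regular vertices since the only path in the module that does not
start with an edge is the trivial path at the infinite emitter `w`. -/
lemma genAct_rel (hw : IsInfiniteEmitter s w) {a b : FreeAlgebra K (Gen V E)}
    (hab : LeavittRel K s r a b) :
    FreeAlgebra.lift K (genAct K s r w) a = FreeAlgebra.lift K (genAct K s r w) b := by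
  induction hab with
  | cohn hab =>
    induction hab with
    | vtx_mul v v' =>
      rw [apply_ite (FreeAlgebra.lift K (genAct K s r w))]
      simp only [map_mul, FreeAlgebra.lift_ι_apply, genAct, map_zero]
      ext φ l
      by_cases h : v = v'
      · subst h
        simp only [vAct, Module.End.mul_apply, LinearMap.coe_mk, AddHom.coe_mk, if_true]
        split_ifs <;> rfl
      · simp only [vAct, Module.End.mul_apply, LinearMap.coe_mk, AddHom.coe_mk, if_neg h]
        split_ifs with h1 h2
        · exact absurd (h1.symm.trans h2) h
        · rfl
        · rfl
    | edge_src e =>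
      simp only [map_mul, FreeAlgebra.lift_ι_apply, genAct]
      ext φ ⟨l, h⟩
      rcases l with _ | ⟨e', l⟩
      · simp [vAct, eAct]
      · simp only [vAct, eAct, Module.End.mul_apply, LinearMap.coe_mk, AddHom.coe_mk]
        by_cases h2 : e' = e
        · exact if_pos (congrArg s h2)
        · simp only [if_neg h2, ite_self]
    | edge_rng e =>
      simp only [map_mul, FreeAlgebra.lift_ι_apply, genAct]
      ext φ ⟨l, h⟩
      cases l
      · simp [eAct]
      · simp only [vAct, eAct, Module.End.mul_apply, LinearMap.coe_mk, AddHom.coe_mk]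
        split_ifs with h1 h2
        · rfl
        · exact absurd (h1 ▸ h.1).symm h2
        · rfl
    | ghost_rng e =>
      simp only [map_mul, FreeAlgebra.lift_ι_apply, genAct]
      ext φ l
      simp only [vAct, gAct, Module.End.mul_apply, LinearMap.coe_mk, AddHom.coe_mk]
      split_ifs with h1 h2 h2
      · rfl
      · rfl
      · exact absurd h2.symm h1
      · rfl
    | ghost_src e =>
      simp only [map_mul, FreeAlgebra.lift_ι_apply, genAct]
      ext φ l
      simp [vAct, gAct, lsrc_cons]
    | ck1 e f =>
      rw [apply_ite (FreeAlgebra.lift K (genAct K s r w))]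
      simp only [map_mul, FreeAlgebra.lift_ι_apply, genAct, map_zero]
      ext φ l
      by_cases h : e = f
      · subst h
        simp only [vAct, gAct, eAct, Module.End.mul_apply, LinearMap.coe_mk, AddHom.coe_mk,
          if_true, eq_comm (a := lsrc s w l.1)]
        split_ifs <;> rfl
      · simp [gAct, eAct, h]
    | unit =>
      simp only [map_one, map_sum, FreeAlgebra.lift_ι_apply, genAct]
      ext φ l
      simp [vAct, LinearMap.sum_apply, Finset.sum_apply]
  | ck2 v hfin hne =>
    have hvw : v ≠ w := by
      rintro rfl
      exact hw hfin
    simp only [map_mul, map_sum, FreeAlgebra.lift_ι_apply, genAct]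
    ext φ ⟨l, h⟩
    cases l with
    | nil => simp [vAct, eAct, LinearMap.sum_apply, Finset.sum_apply, lsrc_nil, hvw.symm]
    | cons e' l =>
      have h1 := h.1
      simp only [vAct, eAct, gAct, LinearMap.sum_apply, Finset.sum_apply, lsrc_cons,
        Module.End.mul_apply, LinearMap.coe_mk, AddHom.coe_mk, Finset.sum_ite_eq,
        Set.Finite.mem_toFinset, Set.mem_ofPred_eq, h1, dite_true]
      rfl

/-- The representation of the Leavitt path algebra on functions on the paths ending at `w`. -/
def rep (hw : IsInfiniteEmitter s w) :
    LeavittPathAlgebra K s r →ₐ[K] Module.End K (PathTo s r w → K) :=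
  RingQuot.liftAlgHom K ⟨FreeAlgebra.lift K (genAct K s r w), fun _ _ h => genAct_rel K r w hw h⟩

/-- The element `w^H` does not vanish: it fixes the trivial path at `w`. -/
lemma wHElem_ne_zero (hw : IsInfiniteEmitter s w) (H : Set V) : wHElem K s r H w ≠ 0 := by
  intro h
  have h1 := congrArg (rep K s r w hw) h
  simp only [wHElem, vtx, edg, gh, rep, map_sub, map_sum, map_mul, map_zero,
    RingQuot.liftAlgHom_mkAlgHom_apply, FreeAlgebra.lift_ι_apply, genAct] at h1
  have h2 := congrFun (LinearMap.congr_fun h1 (fun _ => 1)) ⟨[], trivial⟩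
  simp [vAct, eAct, LinearMap.sum_apply, Finset.sum_apply, lsrc_nil] at h2

end rep

/-! ### The matrix units attached to `f` and `w^H` -/

section rels

variable {K : Type*} [Field K] {V E : Type*} {s r : E → V}

lemma vtx_mul_self (v : V) : vtx K s r v * vtx K s r v = vtx K s r v := by
  have := RingQuot.mkAlgHom_rel K (LeavittRel.cohn (CohnRel.vtx_mul (K := K) (s := s) (r := r) v v))
  simpa [vtx] using this

lemma vtx_mul_of_ne {v w : V} (h : v ≠ w) : vtx K s r v * vtx K s r w = 0 := by
  have := RingQuot.mkAlgHom_rel K (LeavittRel.cohn (CohnRel.vtx_mul (K := K) (s := s) (r := r) v w))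
  simpa [vtx, h] using this

lemma vtx_mul_edg (e : E) : vtx K s r (s e) * edg K s r e = edg K s r e := by
  have := RingQuot.mkAlgHom_rel K (LeavittRel.cohn (CohnRel.edge_src (K := K) (s := s) (r := r) e))
  simpa [vtx, edg] using this

lemma edg_mul_vtx (e : E) : edg K s r e * vtx K s r (r e) = edg K s r e := by
  have := RingQuot.mkAlgHom_rel K (LeavittRel.cohn (CohnRel.edge_rng (K := K) (s := s) (r := r) e))
  simpa [vtx, edg] using this

lemma vtx_mul_gh (e : E) : vtx K s r (r e) * gh K s r e = gh K s r e := by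
  have := RingQuot.mkAlgHom_rel K (LeavittRel.cohn (CohnRel.ghost_rng (K := K) (s := s) (r := r) e))
  simpa [vtx, gh] using this

lemma gh_mul_vtx (e : E) : gh K s r e * vtx K s r (s e) = gh K s r e := by
  have := RingQuot.mkAlgHom_rel K (LeavittRel.cohn (CohnRel.ghost_src (K := K) (s := s) (r := r) e))
  simpa [vtx, gh] using this

lemma gh_mul_edg_self (e : E) : gh K s r e * edg K s r e = vtx K s r (r e) := by
  have := RingQuot.mkAlgHom_rel K (LeavittRel.cohn (CohnRel.ck1 (K := K) (s := s) (r := r) e e))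
  simpa [vtx, edg, gh] using this

lemma gh_mul_edg_of_ne {e f : E} (h : e ≠ f) : gh K s r e * edg K s r f = 0 := by
  have := RingQuot.mkAlgHom_rel K (LeavittRel.cohn (CohnRel.ck1 (K := K) (s := s) (r := r) e f))
  simpa [edg, gh, h] using this

variable {H : Set V} {w : V}

lemma mem_breakingFinset (hw : IsBreakingVertex s r H w) (e : E) :
    e ∈ breakingFinset s r H w ↔ s e = w ∧ r e ∉ H := by
  rw [breakingFinset, dif_pos hw.2.2.1]
  simp

lemma vtx_mul_wHElem (hw : IsBreakingVertex s r H w) :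
    vtx K s r w * wHElem K s r H w = wHElem K s r H w := by
  rw [wHElem, mul_sub, vtx_mul_self, Finset.mul_sum]
  congr 1
  refine Finset.sum_congr rfl fun e he => ?_
  rw [← ((mem_breakingFinset hw e).1 he).1, ← mul_assoc, vtx_mul_edg]

lemma wHElem_mul_vtx (hw : IsBreakingVertex s r H w) :
    wHElem K s r H w * vtx K s r w = wHElem K s r H w := by
  rw [wHElem, sub_mul, vtx_mul_self, Finset.sum_mul]
  congr 1
  refine Finset.sum_congr rfl fun e he => ?_
  rw [← ((mem_breakingFinset hw e).1 he).1, mul_assoc, gh_mul_vtx]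

lemma wHElem_mul_edg (hw : IsBreakingVertex s r H w) {f : E} (hf : r f ∉ H) :
    wHElem K s r H w * edg K s r f = 0 := by
  have h1 : ∀ e, (edg K s r e * gh K s r e) * edg K s r f = if e = f then edg K s r f else 0 := by
    intro e
    split_ifs with h
    · rw [h, mul_assoc, gh_mul_edg_self, edg_mul_vtx]
    · rw [mul_assoc, gh_mul_edg_of_ne h, mul_zero]
  rw [wHElem, sub_mul, Finset.sum_mul]
  simp only [h1, Finset.sum_ite_eq', mem_breakingFinset hw, hf, not_false_eq_true, and_true]
  split_ifs with h
  · rw [← h, vtx_mul_edg, sub_self]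
  · rw [← vtx_mul_edg f, ← mul_assoc, vtx_mul_of_ne (Ne.symm h), zero_mul, sub_zero]

lemma gh_mul_wHElem (hw : IsBreakingVertex s r H w) {f : E} (hf : r f ∉ H) :
    gh K s r f * wHElem K s r H w = 0 := by
  have h1 : ∀ e, gh K s r f * (edg K s r e * gh K s r e) = if e = f then gh K s r f else 0 := by
    intro e
    split_ifs with h
    · rw [h, ← mul_assoc, gh_mul_edg_self, vtx_mul_gh]
    · rw [← mul_assoc, gh_mul_edg_of_ne (Ne.symm h), zero_mul]
  rw [wHElem, mul_sub, Finset.mul_sum]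
  simp only [h1, Finset.sum_ite_eq', mem_breakingFinset hw, hf, not_false_eq_true, and_true]
  split_ifs with h
  · rw [← h, gh_mul_vtx, sub_self]
  · rw [← gh_mul_vtx f, mul_assoc, vtx_mul_of_ne h, mul_zero, sub_zero]

lemma wHElem_mul_self (hw : IsBreakingVertex s r H w) :
    wHElem K s r H w * wHElem K s r H w = wHElem K s r H w := by
  conv_lhs => rhs; rw [wHElem]
  rw [mul_sub, wHElem_mul_vtx hw, Finset.mul_sum, Finset.sum_eq_zero, sub_zero]
  intro e he
  rw [← mul_assoc, wHElem_mul_edg hw ((mem_breakingFinset hw e).1 he).2, zero_mul]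

/-- The matrix units `w^H`, `w^H f^*`, `f w^H`. The idempotent complementing `w^H` is `s(f)`,
from which `w^H` has to be removed when `f` is a loop at `w`. -/
lemma unitsData (hw : IsBreakingVertex s r H w) {f : E} (hf : r f = w) :
    UnitsData (vtx K s r (s f) - if s f = w then wHElem K s r H w else 0) (wHElem K s r H w)
      (wHElem K s r H w * gh K s r f) (edg K s r f * wHElem K s r H w) := by
  have hfH : r f ∉ H := hf ▸ hw.1
  have hee := wHElem_mul_self (K := K) hw
  have hef := wHElem_mul_edg (K := K) hw hfH
  have hge := gh_mul_wHElem (K := K) hw hfH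
  have hve := vtx_mul_wHElem (K := K) hw
  have hev := wHElem_mul_vtx (K := K) hw
  refine ⟨?_, hee, ?_, ?_, ?_, ?_, ?_, ?_, ?_⟩
  · split_ifs with h
    · rw [h, sub_mul, mul_sub, mul_sub, vtx_mul_self, hve, hev, hee]; simp
    · simp [vtx_mul_self]
  · split_ifs with h
    · rw [h, sub_mul, hve, hee, sub_self]
    · rw [sub_zero, ← hve, ← mul_assoc, vtx_mul_of_ne h, zero_mul]
  · split_ifs with h
    · rw [h, mul_sub, hev, hee, sub_self]
    · rw [sub_zero, ← hev, mul_assoc, vtx_mul_of_ne (Ne.symm h), mul_zero]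
  · rw [← mul_assoc, hee]
  · rw [mul_assoc, mul_sub, gh_mul_vtx]
    split_ifs
    · rw [hge, sub_zero]
    · rw [mul_zero, sub_zero]
  · rw [← mul_assoc, sub_mul, vtx_mul_edg]
    split_ifs
    · rw [hef, sub_zero]
    · rw [zero_mul, sub_zero]
  · rw [mul_assoc, hee]
  · rw [mul_assoc, ← mul_assoc (gh K s r f), gh_mul_edg_self, hf, hve, hee]

end rels

end LPA

/-! ### Arithmetic of the parameters -/

section arith

open Polynomial

/-- The absolute value `2 ^ deg` on polynomials over a domain. -/
def polyAbv (F : Type*) [CommRing F] [IsDomain F] : AbsoluteValue F[X] ℝ where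
  toFun p := if p = 0 then 0 else 2 ^ p.natDegree
  map_mul' p q := by
    by_cases hp : p = 0
    · simp [hp]
    by_cases hq : q = 0
    · simp [hq]
    simp [hp, hq, natDegree_mul hp hq, pow_add]
  nonneg' p := by positivity
  eq_zero' p := by simp
  add_le' p q := by
    by_cases hp : p = 0
    · simp [hp]
    by_cases hq : q = 0
    · simp [hq]
    by_cases hpq : p + q = 0
    · simp only [hpq, if_true, hp, hq, if_false]
      positivity
    simp only [hp, hq, hpq, if_false]
    rcases le_max_iff.1 (natDegree_add_le p q) with h | h
    · exact (pow_le_pow_right₀ one_le_two h).trans (le_add_of_nonneg_right (by positivity))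
    · exact (pow_le_pow_right₀ one_le_two h).trans (le_add_of_nonneg_left (by positivity))

lemma polyAbv_apply {F : Type*} [CommRing F] [IsDomain F] (p : F[X]) :
    polyAbv F p = if p = 0 then 0 else 2 ^ p.natDegree := rfl

lemma polyAbv_C {F : Type*} [CommRing F] [IsDomain F] {c : F} (hc : c ≠ 0) :
    polyAbv F (C c) = 1 := by
  simp [polyAbv_apply, hc]

lemma polyAbv_X {F : Type*} [CommRing F] [IsDomain F] : polyAbv F X = 2 := by
  simp [polyAbv_apply]

variable {K A : Type*} [Field K] [Ring A] [Algebra K A]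

/-- Unipotent case: over `ℤ` with its usual absolute value when `α = 2`, and over `ℤ[X]` with the
absolute value `2 ^ deg` when `α` is transcendental. -/
theorem freePair_charZero [CharZero K] {p e x y : A} (h : UnitsData p e x y) (he : e ≠ 0) {α : K}
    (hα : α = 2 ∨ TranscendentalOverPrime K α) :
    ∃ ua ub : Aˣ, (ua : A) = 1 + α • x ∧ (ub : A) = 1 + α • y ∧ FreePair ua ub := by
  obtain ⟨ua, hua⟩ := h.exists_unit_x (l := (1 : K)) (m := 1) one_ne_zero one_ne_zero α
  obtain ⟨ub, hub⟩ := h.exists_unit_y (l := (1 : K)) (m := 1) one_ne_zero one_ne_zero α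
  refine ⟨ua, ub, by simp [hua], by simp [hub], ?_⟩
  rcases hα with rfl | hα
  · refine freePair_of_triangular h he one_ne_zero one_ne_zero (Int.castRingHom K)
      Int.cast_injective (.comp .abs (f := Int.castRingHom ℝ) Int.cast_injective) (fun n => (n : K))
      (by simp) (fun n => by simp [add_comm]) (fun n => by simp [add_comm]) ?_ hua hub
    intro n hn
    refine ⟨1, 1, 2 * n, by simp, by simp, by simp, by simp, by simp, ?_⟩
    have : (1 : ℝ) ≤ |(n : ℝ)| := by exact_mod_cast Int.one_le_abs hn
    rw [map_mul]
    change 2 ≤ |((2 : ℤ) : ℝ)| * |(n : ℝ)|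
    norm_num
    linarith
  · have hinj : Function.Injective (aeval α : ℤ[X] →ₐ[ℤ] K).toRingHom := by
      rw [injective_iff_map_eq_zero]
      intro q hq
      have := hα q hq
      rwa [Polynomial.map_eq_zero_iff Int.cast_injective] at this
    refine freePair_of_triangular h he one_ne_zero one_ne_zero (aeval α : ℤ[X] →ₐ[ℤ] K).toRingHom
      hinj (polyAbv ℤ) (fun n => (n : K))
      (by simp) (fun n => by simp [add_comm]) (fun n => by simp [add_comm]) ?_ hua hub
    intro n hn
    refine ⟨1, 1, X * C n, by simp, by simp, by simp, by simp, by simp, ?_⟩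
    rw [map_mul, polyAbv_X, polyAbv_C hn, mul_one]

lemma AlgIndepOverPrime.transcendental_right {α β : K} (h : AlgIndepOverPrime K α β) :
    TranscendentalOverPrime K β := by
  intro q hq
  have h1 := h (aeval (MvPolynomial.X 1) q) (by
    rw [← Polynomial.aeval_algHom_apply]
    simpa using hq)
  -- specializing both variables to `X` recovers `q` from its copy in the second variable
  have h2 : mapRingHom (Int.castRingHom K) =
      ((MvPolynomial.aeval (fun _ => (X : K[X])) :
        MvPolynomial (Fin 2) K →ₐ[K] K[X]).toRingHom.comp
          (MvPolynomial.map (Int.castRingHom K))).comp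
            (aeval (MvPolynomial.X 1) : ℤ[X] →ₐ[ℤ] MvPolynomial (Fin 2) ℤ).toRingHom := by
    apply Polynomial.ringHom_ext <;> simp
  have h3 := congrArg (fun g => g q) h2
  simpa [h1] using h3

lemma AlgIndepOverPrime.algebraicIndependent {α β : K} (h : AlgIndepOverPrime K α β) (t : ℕ)
    [Fact t.Prime] [Algebra (ZMod t) K] : AlgebraicIndependent (ZMod t) ![α, β] := by
  rw [algebraicIndependent_iff]
  intro q hq
  obtain ⟨q, rfl⟩ := MvPolynomial.map_surjective (Int.castRingHom (ZMod t))
    (ZMod.ringHom_surjective _) q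
  have hc : (algebraMap (ZMod t) K).comp (Int.castRingHom (ZMod t)) = Int.castRingHom K :=
    RingHom.ext_int _ _
  have h1 := h q (by
    rw [MvPolynomial.aeval_def, MvPolynomial.eval₂_map, hc] at hq
    exact hq)
  rw [← hc, ← MvPolynomial.map_map] at h1
  exact MvPolynomial.map_injective _ (algebraMap (ZMod t) K).injective (by simpa using h1)

/-- The diagonal ratio `l / m` is not a root of unity. -/
lemma zpow_ne_of_transcendental {β m : K} (hβ : TranscendentalOverPrime K β)
    (hm : m = β⁻¹ ∨ m = β + β⁻¹ - 1) :
    β ≠ 0 ∧ m ≠ 0 ∧ ∀ n : ℤ, n ≠ 0 → β ^ n ≠ m ^ n := by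
  have hq : ∀ q : ℤ[X], q.eval 0 = 1 → aeval β q ≠ 0 := by
    intro q hq h0
    have := congrArg (coeff · 0) (hβ q h0)
    simp [coeff_zero_eq_eval_zero, hq] at this
  have hβ0 : β ≠ 0 := by
    intro h0
    simpa using hβ X (by simpa using h0)
  have hm0 : m ≠ 0 := by
    rcases hm with rfl | rfl
    · exact inv_ne_zero hβ0
    · intro h0
      refine hq (X ^ 2 - X + 1) (by simp) ?_
      have : β * (β + β⁻¹ - 1) = 0 := by rw [h0, mul_zero]
      field_simp at this
      simp
      linear_combination this
  have hnat : ∀ n : ℕ, n ≠ 0 → β ^ n ≠ m ^ n := by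
    intro n hn h
    rcases hm with rfl | rfl
    · refine hq (1 - X ^ (2 * n)) (by simp [hn]) ?_
      have : β ^ n * β ^ n = 1 := by
        nth_rewrite 2 [h]
        rw [← mul_pow, mul_inv_cancel₀ hβ0, one_pow]
      simp
      linear_combination -this
    · refine hq ((X ^ 2 - X + 1) ^ n - X ^ (2 * n)) (by simp [hn]) ?_
      have h1 : β ^ 2 - β + 1 = β * (β + β⁻¹ - 1) := by field_simp; ring
      simp only [map_sub, map_pow, map_add, aeval_X, map_one, h1]
      rw [mul_pow, ← h]
      ring
  refine ⟨hβ0, hm0, fun n hn h => ?_⟩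
  obtain ⟨k, rfl | rfl⟩ := n.eq_nat_or_neg
  · exact hnat k (by simpa using hn) (by simpa using h)
  · exact hnat k (by simpa using hn) (by simpa using h)

/-- Positive characteristic: the diagonal entries live in `F = 𝔽_t(β)`, and the absolute value is
`2 ^ deg` on `F[X]`, where `X` is specialized to `α`. -/
theorem freePair_charP {p e x y : A} (h : UnitsData p e x y) (he : e ≠ 0) {α β m : K} {t : ℕ}
    (ht : 0 < t) [CharP K t] (hαβ : AlgIndepOverPrime K α β)
    (hm : m = β⁻¹ ∨ m = β + β⁻¹ - 1) :
    ∃ uc ud : Aˣ, (uc : A) = 1 + α • x + (β - 1) • p + (m - 1) • e ∧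
      (ud : A) = 1 + α • y + (β - 1) • p + (m - 1) • e ∧ FreePair uc ud := by
  obtain ⟨hβ0, hm0, hpow⟩ := zpow_ne_of_transcendental hαβ.transcendental_right hm
  obtain ⟨uc, huc⟩ := h.exists_unit_x hβ0 hm0 α
  obtain ⟨ud, hud⟩ := h.exists_unit_y hβ0 hm0 α
  refine ⟨uc, ud, huc, hud, ?_⟩
  have : Fact t.Prime := ⟨(CharP.char_is_prime_or_zero K t).resolve_right ht.ne'⟩
  let _ : Algebra (ZMod t) K := ZMod.algebra K t
  let F := IntermediateField.adjoin (ZMod t) {β}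
  have hα : Transcendental F α := by
    rw [IntermediateField.transcendental_adjoin_iff]
    have := (hαβ.algebraicIndependent t).transcendental_adjoin (s := {1}) (i := 0) (by simp)
    rw [Set.image_singleton] at this
    exact this
  have hβF : β ∈ F := IntermediateField.mem_adjoin_simple_self _ β
  have hmF : m ∈ F := by
    rcases hm with rfl | rfl
    · exact inv_mem hβF
    · exact sub_mem (add_mem hβF (inv_mem hβF)) (one_mem F)
  have hlm : β - m ≠ 0 := sub_ne_zero.2 (by simpa using hpow 1 one_ne_zero)
  refine freePair_of_triangular h he hβ0 hm0 (aeval α : F[X] →ₐ[F] K).toRingHom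
    (transcendental_iff_injective.1 hα) (polyAbv F) (fun n => (β ^ n - m ^ n) / (β - m))
    (by simp) (fun n => ?_) (fun n => ?_) (fun n hn => ?_) huc hud
  · rw [zpow_add_one₀ hβ0, zpow_add_one₀ hm0]
    field_simp
    ring
  · rw [zpow_add_one₀ hβ0, zpow_add_one₀ hm0]
    field_simp
    ring
  · have hS : (β ^ n - m ^ n) / (β - m) ≠ 0 := div_ne_zero (sub_ne_zero.2 (hpow n hn)) hlm
    have hSF : (β ^ n - m ^ n) / (β - m) ∈ F :=
      div_mem (sub_mem (zpow_mem hβF n) (zpow_mem hmF n)) (sub_mem hβF hmF)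
    refine ⟨C ⟨β ^ n, zpow_mem hβF n⟩, C ⟨m ^ n, zpow_mem hmF n⟩, X * C ⟨_, hSF⟩, ?_, ?_, ?_,
      polyAbv_C ?_, polyAbv_C ?_, ?_⟩
    · simp
    · simp
    · simpa using mul_comm _ _
    · simpa [Subtype.ext_iff] using zpow_ne_zero n hβ0
    · simpa [Subtype.ext_iff] using zpow_ne_zero n hm0
    · rw [map_mul, polyAbv_X, polyAbv_C (by simpa [Subtype.ext_iff] using hS), mul_one]

end arith

/-- free subgroups of units determined by a primitive ideal of type I. -/
theorem stmt10 (K V E : Type*) [Field K] [Fintype V] (s r : E → V)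
    (hK : ¬ IsAbsoluteField K)
    (P : TwoSidedIdeal (LPA.LeavittPathAlgebra K s r))
    (H : Set V) (hH : H = {v : V | LPA.vtx K s r v ∈ P})
    (hHer : LPA.IsHereditary s r H) (hSat : LPA.IsSaturated s r H)
    (w : V) (hw : LPA.IsBreakingVertex s r H w)
    (hMw : {u : V | LPA.Reaches s r u w} = Hᶜ)
    (hP : P = LPA.idealHS K s r H ({u : V | LPA.IsBreakingVertex s r H u} \ {w}))
    (hprim : IsPrimitiveIdeal P)
    (hncq : ∃ x y : P.ringCon.Quotient, x * y ≠ y * x)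
    (f : E) (hf : r f = w) (α β : K) :
    (CharP K 0 → (α = 2 ∨ TranscendentalOverPrime K α) →
      ∃ ua ub : (LPA.LeavittPathAlgebra K s r)ˣ,
        (ua : LPA.LeavittPathAlgebra K s r) =
            1 + algebraMap K _ α * (LPA.wHElem K s r H w * LPA.gh K s r f) ∧
        (ub : LPA.LeavittPathAlgebra K s r) =
            1 + algebraMap K _ α * (LPA.edg K s r f * LPA.wHElem K s r H w) ∧
        FreePair ua ub) ∧
    (∀ t : ℕ, 0 < t → CharP K t → AlgIndepOverPrime K α β →
      ∃ uc ud : (LPA.LeavittPathAlgebra K s r)ˣ,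
        (uc : LPA.LeavittPathAlgebra K s r) =
            1 + algebraMap K _ α * (LPA.wHElem K s r H w * LPA.gh K s r f)
              + algebraMap K _ (β - 1) * LPA.vtx K s r (s f)
              + algebraMap K _ (β⁻¹ - 1) * LPA.wHElem K s r H w ∧
        (ud : LPA.LeavittPathAlgebra K s r) =
            1 + algebraMap K _ α * (LPA.edg K s r f * LPA.wHElem K s r H w)
              + algebraMap K _ (β - 1) * LPA.vtx K s r (s f)
              + algebraMap K _ (β⁻¹ - 1) * LPA.wHElem K s r H w ∧
        FreePair uc ud) := by
  have hu := LPA.unitsData (K := K) hw hf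
  have he : LPA.wHElem K s r H w ≠ 0 := LPA.wHElem_ne_zero K s r w hw.2.1 H
  refine ⟨fun h0 hα => ?_, fun t ht hchar hαβ => ?_⟩
  · have : CharZero K := CharP.charP_to_charZero K
    simpa only [← Algebra.smul_def] using freePair_charZero hu he hα
  · obtain ⟨uc, ud, huc, hud, hfree⟩ := freePair_charP hu he ht hαβ
      (m := if s f = w then β + β⁻¹ - 1 else β⁻¹) (by split_ifs <;> simp)
    refine ⟨uc, ud, ?_, ?_, hfree⟩
    · rw [huc]
      simp only [← Algebra.smul_def]
      split_ifs <;> module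
    · rw [hud]
      simp only [← Algebra.smul_def]
      split_ifs <;> module
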